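/- Let p > 2 be prime, let g be a primitive root modulo p, and let a ≥ 0, r > 0, N > 0 be integers such that the arithmetic progression J = {a + r, a + 2r, …, a + Nr} is contained in [1, p−1]. Let M(g) = { log_g(a + jr)/(p−1) : 1 ≤ j ≤ N } ⊆ [0,1], where log_g z denotes the discrete logarithm of z to base g. Then there exists an absolute constant c₁ > 0 (independent of p, g, a, r, N) such that for all real 0 ≤ α ≤ β ≤ 1 with 1/π < p(β−α), the discrepancy satisfies |D(M(g); α, β)| ≤ c₁ · p^{1/2} · (log p) · (2 + log(p(β−α))). -/

import Mathlib

open scoped Classical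

/-!
Put `n = p - 1`. The condition `α ≤ log_g z / n ≤ β` says that the exponent of `z` lies in an
interval of `L` consecutive integers in `[0, n)`, with `L = (β - α) n + O(1)`. Hence the quantity to
estimate is the number of pairs `(k, j)`, with `k` in that interval and `1 ≤ j ≤ N`, such that
`g ^ k = a + j r` in `ZMod p`.

Detecting this equation by the additive characters `e_p(t ·)`, the frequency `t = 0` contributes
`L N / p`, which is `(β - α) N + O(1)`. The frequency `t ≠ 0` contributes `1 / p` times an
incomplete exponential sum `∑ e_p(t g ^ k)` over the interval and a geometric sum of length `N`.

* Completing the first sum by the characters of `ZMod n` expresses it through the sums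
  `∑_k e_p(t g ^ k) e_n(m k)` over a full period, each at most `√p` in absolute value
  (`norm_expSum_le`), and geometric sums modulo `n` of length `L`.
* The `ℓ¹` norm over all frequencies modulo `q` of a geometric sum of length `L` is at most
  `q (1 + 4 log (1 + L))` (`sum_norm_incSum_le`). This is used with `q = n` and length `L`, and with
  `q = p` and length `N`.

Together the nonzero frequencies contribute at most
`√p (1 + 4 log (1 + L)) (1 + 4 log (1 + N))` (`abs_count_sub_le`). The second factor is
`O(2 + log (p (β - α)))` because `p (β - α) > 1 / π`, and the third is `O(log p)`.
-/

/-! ### Geometric sums modulo `q` -/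

/-- The Fourier coefficient at frequency `t` of the interval `{A, …, A + L - 1}` modulo `q`:
`∑ e_q(t x)` over the `L` consecutive integers `x` starting at `A`. -/
noncomputable def incSum (q : ℕ) [NeZero q] (A L : ℕ) (t : ZMod q) : ℂ :=
  ∑ i ∈ Finset.range L, ZMod.stdAddChar (t * ((A + i : ℕ) : ZMod q))

lemma norm_incSum_eq (q : ℕ) [NeZero q] (A L : ℕ) (t : ZMod q) :
    ‖incSum q A L t‖ = ‖∑ i ∈ Finset.range L, (ZMod.stdAddChar t : ℂ) ^ i‖ := by
  have h : incSum q A L t = ZMod.stdAddChar (t * (A : ZMod q)) *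
      ∑ i ∈ Finset.range L, (ZMod.stdAddChar t : ℂ) ^ i := by
    unfold incSum
    rw [Finset.mul_sum]
    refine Finset.sum_congr rfl fun i _ => ?_
    rw [← AddChar.map_nsmul_eq_pow, ← AddChar.map_add_eq_mul]
    congr 1
    push_cast
    rw [nsmul_eq_mul]
    ring
  rw [h, norm_mul, AddChar.norm_apply, one_mul]

lemma norm_incSum_le_length (q : ℕ) [NeZero q] (A L : ℕ) (t : ZMod q) :
    ‖incSum q A L t‖ ≤ L := by
  refine (norm_sum_le _ _).trans ?_
  simp [AddChar.norm_apply]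

lemma norm_stdAddChar_sub_one (q : ℕ) [NeZero q] (v : ℕ) :
    ‖(ZMod.stdAddChar (v : ZMod q) : ℂ) - 1‖ = 2 * |Real.sin (Real.pi * v / q)| := by
  have h : (ZMod.stdAddChar (v : ZMod q) : ℂ)
      = Complex.exp (Complex.I * ((2 * Real.pi * v / q : ℝ) : ℂ)) := by
    have := ZMod.stdAddChar_coe (N := q) (v : ℤ)
    push_cast at this
    rw [this]
    congr 1
    push_cast
    ring
  rw [h, Complex.norm_exp_I_mul_ofReal_sub_one, norm_mul]
  simp only [Real.norm_eq_abs, abs_two]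
  congr 3
  ring

/-- Summing the geometric series gives `|S| |e_q(v) - 1| ≤ 2`, where `|e_q(v) - 1| = 2 |sin (π v / q)|`. -/
lemma norm_incSum_mul_le (q : ℕ) [NeZero q] (A L : ℕ) (v : ℕ) :
    ‖incSum q A L (v : ZMod q)‖ * |Real.sin (Real.pi * v / q)| ≤ 1 := by
  have h1 := geom_sum_mul (ZMod.stdAddChar (v : ZMod q) : ℂ) L
  have h2 := congrArg norm h1
  rw [norm_mul, ← norm_incSum_eq q A, norm_stdAddChar_sub_one] at h2
  have h3 : ‖(ZMod.stdAddChar (v : ZMod q) : ℂ) ^ L - 1‖ ≤ 2 := by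
    refine (norm_sub_le _ _).trans ?_
    rw [norm_pow, AddChar.norm_apply]; norm_num
  linarith

/-- The bound `min(L, q / v)` holds for `v ≤ q / 2`, by `sin x ≥ 2 x / π` on `[0, π / 2]`, and
`min(L, q / (q - v))` holds for `v ≥ q / 2`; their sum covers both cases. -/
lemma norm_incSum_le (q : ℕ) [NeZero q] (A L : ℕ) (v : ℕ) (h0 : 0 < v) (hq : v < q) :
    ‖incSum q A L (v : ZMod q)‖ ≤
      min (L : ℝ) (q / v) + min (L : ℝ) (q / ((q - v : ℕ) : ℝ)) := by
  have hq0 : (0 : ℝ) < q := by exact_mod_cast h0.trans hq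
  have hv0 : (0 : ℝ) < v := by exact_mod_cast h0
  have hvq : (v : ℝ) < q := by exact_mod_cast hq
  have hw : ((q - v : ℕ) : ℝ) = q - v := by rw [Nat.cast_sub hq.le]
  have hL := norm_incSum_le_length q A L (v : ZMod q)
  have hs := norm_incSum_mul_le q A L v
  have hpi := Real.pi_pos
  have key : ∀ w : ℝ, 0 < w → w / q ≤ 1 / 2 →
      Real.sin (Real.pi * v / q) = Real.sin (Real.pi * (w / q)) →
      ‖incSum q A L (v : ZMod q)‖ ≤ min (L : ℝ) (q / w) := by
    intro w hw0 hw hsin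
    refine le_min hL ?_
    have hb := Real.mul_le_sin (x := Real.pi * (w / q)) (by positivity) (by nlinarith)
    have hc : 2 / Real.pi * (Real.pi * (w / q)) = 2 * (w / q) := by field_simp
    rw [hc] at hb
    have hwq : 0 < w / q := by positivity
    rw [hsin, abs_of_nonneg (by linarith)] at hs
    have hn := norm_nonneg (incSum q A L (v : ZMod q))
    have : ‖incSum q A L (v : ZMod q)‖ * (w / q) ≤ 1 := by nlinarith
    rw [le_div_iff₀ hw0]
    have e : ‖incSum q A L (v : ZMod q)‖ * w
        = ‖incSum q A L (v : ZMod q)‖ * (w / q) * q := by field_simp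
    rw [e]; nlinarith
  rcases le_total ((v : ℝ) / q) (1 / 2) with h | h
  · have := key v hv0 h (by rw [mul_div_assoc])
    have : 0 ≤ min (L : ℝ) (q / ((q - v : ℕ) : ℝ)) := by positivity
    linarith
  · have := key (q - v) (by linarith) (by rw [sub_div, div_self hq0.ne']; linarith) (by
      rw [← Real.sin_pi_sub]; congr 1; field_simp)
    have : 0 ≤ min (L : ℝ) (q / v) := by positivity
    rw [hw]; linarith

lemma min_le_harm {x y : ℝ} (hx : 0 < x) (hy : 0 < y) : min x y ≤ 2 * (x * y / (x + y)) := by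
  rw [← mul_div_assoc, le_div_iff₀ (by positivity)]
  rcases min_cases x y with ⟨h, h'⟩ | ⟨h, h'⟩ <;> rw [h] <;> nlinarith

lemma sum_inv_add_le (c : ℝ) (hc : 0 < c) (Q : ℕ) :
    ∑ v ∈ Finset.range Q, 1 / ((v : ℝ) + 1 + c) ≤ Real.log (Q + c) - Real.log c := by
  induction Q with
  | zero => simp
  | succ Q ih =>
    rw [Finset.sum_range_succ]
    have h1 : (0 : ℝ) < Q + c := by positivity
    have h2 : (0 : ℝ) < Q + 1 + c := by positivity
    have := Real.log_le_sub_one_of_pos (x := (Q + c) / (Q + 1 + c)) (by positivity)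
    rw [Real.log_div h1.ne' h2.ne'] at this
    have e : (Q + c) / (Q + 1 + c) - 1 = - (1 / ((Q : ℝ) + 1 + c)) := by field_simp; ring
    push_cast
    linarith

/-- The minimum is at most the harmonic mean `2 q / (v + q / L)`, whose sum telescopes against a
logarithm. This yields `log (1 + L)` rather than `log q`. -/
lemma sum_min_le (q L : ℕ) (hq : 0 < q) (hL : 0 < L) (Q : ℕ) (hQ : Q ≤ q) :
    ∑ v ∈ Finset.range Q, min (L : ℝ) (q / ((v + 1 : ℕ) : ℝ)) ≤ 2 * q * Real.log (1 + L) := by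
  have hq0 : (0 : ℝ) < q := by exact_mod_cast hq
  have hL0 : (0 : ℝ) < L := by exact_mod_cast hL
  have hQ' : (Q : ℝ) ≤ q := by exact_mod_cast hQ
  have hc : (0 : ℝ) < q / L := by positivity
  calc _ ≤ ∑ v ∈ Finset.range Q, 2 * q * (1 / ((v : ℝ) + 1 + q / L)) := by
        refine Finset.sum_le_sum fun v _ => (min_le_harm hL0 (by positivity)).trans_eq ?_
        push_cast
        field_simp
        try ring
    _ = 2 * q * ∑ v ∈ Finset.range Q, (1 / ((v : ℝ) + 1 + q / L)) := by rw [Finset.mul_sum]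
    _ ≤ 2 * q * (Real.log (Q + q / L) - Real.log (q / L)) := by
        gcongr; exact sum_inv_add_le _ hc Q
    _ ≤ 2 * q * Real.log (1 + L) := by
        gcongr
        rw [← Real.log_div (by positivity) hc.ne']
        refine Real.log_le_log (by positivity) ?_
        rw [div_le_iff₀ hc]
        have : (1 + (L : ℝ)) * (q / L) = q / L + q := by field_simp
        linarith

/-- `ℓ¹` bound for the Fourier coefficients of an interval of length `L` modulo `q`. -/
lemma sum_norm_incSum_le (q : ℕ) [NeZero q] (A L : ℕ) (hLq : L ≤ q) :
    ∑ t : ZMod q, ‖incSum q A L t‖ ≤ q * (1 + 4 * Real.log (1 + L)) := by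
  have hq : 0 < q := Nat.pos_of_neZero q
  rcases Nat.eq_zero_or_pos L with rfl | hL
  · simp [incSum]
  have e : ∑ t : ZMod q, ‖incSum q A L t‖
      = ∑ v ∈ Finset.range q, ‖incSum q A L (v : ZMod q)‖ := by
    refine Finset.sum_bij' (fun t _ => t.val) (fun v _ => (v : ZMod q)) ?_ ?_ ?_ ?_ ?_
    · intro t _; exact Finset.mem_range.2 t.val_lt
    · intro v _; simp
    · intro t _; simp
    · intro v hv; exact ZMod.val_cast_of_lt (Finset.mem_range.1 hv)
    · intro t _; simp
  obtain ⟨Q, rfl⟩ : ∃ Q, q = Q + 1 := ⟨q - 1, by omega⟩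
  rw [e, Finset.sum_range_succ']
  have h0 := norm_incSum_le_length (Q + 1) A L ((0 : ℕ) : ZMod (Q + 1))
  have hs : ∑ v ∈ Finset.range Q, ‖incSum (Q + 1) A L ((v + 1 : ℕ) : ZMod (Q + 1))‖ ≤
      ∑ v ∈ Finset.range Q, min (L : ℝ) ((Q + 1 : ℕ) / ((v + 1 : ℕ) : ℝ)) +
      ∑ v ∈ Finset.range Q, min (L : ℝ) ((Q + 1 : ℕ) / ((v + 1 : ℕ) : ℝ)) := by
    -- reversing the second sum turns `v ↦ v + 1` into `v ↦ q - (v + 1)`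
    conv_rhs => rw [← Finset.sum_range_reflect
      (fun v => min (L : ℝ) ((Q + 1 : ℕ) / ((v + 1 : ℕ) : ℝ))) Q]
    conv_rhs => arg 1; rw [Finset.sum_range_reflect
      (fun v => min (L : ℝ) ((Q + 1 : ℕ) / ((v + 1 : ℕ) : ℝ))) Q]
    rw [← Finset.sum_add_distrib]
    refine Finset.sum_le_sum fun v hv => ?_
    have hv := Finset.mem_range.1 hv
    have := norm_incSum_le (Q + 1) A L (v + 1) (by omega) (by omega)
    rw [show Q + 1 - (v + 1) = Q - 1 - v + 1 by omega] at this
    exact this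
  have hm := sum_min_le (Q + 1) L hq hL Q (by omega)
  have hLq' : (L : ℝ) ≤ (Q + 1 : ℕ) := by exact_mod_cast hLq
  linarith

/-! ### Exponential sums over powers of a primitive root -/

/-- Orthogonality of the additive characters of `ZMod q`. -/
lemma sum_stdAddChar_mul (q : ℕ) [NeZero q] (x : ZMod q) :
    ∑ t : ZMod q, (ZMod.stdAddChar (t * x) : ℂ) = if x = 0 then (q : ℂ) else 0 := by
  have := AddChar.sum_mulShift x (ZMod.isPrimitive_stdAddChar q)
  rw [ZMod.card] at this
  rw [this]
  split_ifs <;> simp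

/-- The complete sum `∑ e_p(t E(k)) e_n(m k)` over `k` modulo `n`. When `E(k) = g ^ k` with `g` a
primitive root and `n = p - 1`, it is a Gauss sum. -/
noncomputable def expSum {p n : ℕ} [NeZero p] [NeZero n] (E : ZMod n → ZMod p)
    (t : ZMod p) (m : ZMod n) : ℂ :=
  ∑ k : ZMod n, ZMod.stdAddChar (t * E k) * ZMod.stdAddChar (m * k)

/-- Shifting `k` by `l` replaces `t` by `t E(l)` and multiplies the sum by a root of unity. -/
lemma norm_expSum_mul {p n : ℕ} [NeZero p] [NeZero n] (E : ZMod n → ZMod p)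
    (hE : ∀ k l, E (k + l) = E k * E l) (t : ZMod p) (m l : ZMod n) :
    ‖expSum E (t * E l) m‖ = ‖expSum E t m‖ := by
  have h : expSum E t m = ZMod.stdAddChar (m * l) * expSum E (t * E l) m := by
    unfold expSum
    rw [Finset.mul_sum, ← Equiv.sum_comp (Equiv.addRight l)]
    refine Finset.sum_congr rfl fun k _ => ?_
    simp only [Equiv.coe_addRight, hE, mul_add, AddChar.map_add_eq_mul]
    rw [show t * (E k * E l) = t * E l * E k by ring]
    ring
  rw [h, norm_mul, AddChar.norm_apply, one_mul]

/-- Parseval's identity over the frequencies `s` modulo `p`. -/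
lemma sum_sq_norm_expSum {p n : ℕ} [NeZero p] [NeZero n] (E : ZMod n → ZMod p)
    (hinj : Function.Injective E) (m : ZMod n) :
    ∑ s : ZMod p, ‖expSum E s m‖ ^ 2 = p * n := by
  have h : ((∑ s : ZMod p, ‖expSum E s m‖ ^ 2 : ℝ) : ℂ) = p * n := by
    push_cast
    simp_rw [← Complex.mul_conj']
    unfold expSum
    simp_rw [map_sum, map_mul, ← AddChar.map_neg_eq_conj, Finset.sum_mul_sum]
    rw [Finset.sum_comm]
    have hk : ∀ k : ZMod n, ∑ s : ZMod p, ∑ l : ZMod n,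
        (ZMod.stdAddChar (s * E k) * ZMod.stdAddChar (m * k) : ℂ) *
          (ZMod.stdAddChar (-(s * E l)) * ZMod.stdAddChar (-(m * l))) = p := by
      intro k
      rw [Finset.sum_comm]
      have : ∀ l : ZMod n, ∑ s : ZMod p,
          (ZMod.stdAddChar (s * E k) * ZMod.stdAddChar (m * k) : ℂ) *
          (ZMod.stdAddChar (-(s * E l)) * ZMod.stdAddChar (-(m * l))) =
          if k = l then (p : ℂ) else 0 := by
        intro l
        have e : ∀ s : ZMod p, (ZMod.stdAddChar (s * E k) * ZMod.stdAddChar (m * k) : ℂ) *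
          (ZMod.stdAddChar (-(s * E l)) * ZMod.stdAddChar (-(m * l))) =
            ZMod.stdAddChar (m * (k - l)) * ZMod.stdAddChar (s * (E k - E l)) := by
          intro s
          rw [mul_sub, mul_sub, sub_eq_add_neg, sub_eq_add_neg, AddChar.map_add_eq_mul,
            AddChar.map_add_eq_mul]
          ring
        simp_rw [e]
        rw [← Finset.mul_sum, sum_stdAddChar_mul]
        by_cases hkl : k = l
        · simp [hkl]
        · rw [if_neg hkl, if_neg, mul_zero]
          rw [sub_eq_zero]; exact fun h => hkl (hinj h)
      simp_rw [this]
      simp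
    simp_rw [hk]
    simp [mul_comm]
  exact_mod_cast h

/-- The sums at the `n` distinct frequencies `t E(l)` have the same absolute value, so Parseval's
identity gives `n |G|² ≤ p n`. -/
lemma norm_expSum_le {p n : ℕ} [Fact p.Prime] [NeZero n] (E : ZMod n → ZMod p)
    (hE : ∀ k l, E (k + l) = E k * E l) (hinj : Function.Injective E)
    (t : ZMod p) (ht : t ≠ 0) (m : ZMod n) :
    ‖expSum E t m‖ ≤ √p := by
  have h := sum_sq_norm_expSum E hinj m
  have hinj' : Function.Injective fun l => t * E l := fun k l hkl =>
    hinj (mul_left_cancel₀ ht hkl)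
  have h2 : ∑ s ∈ Finset.univ.image (fun l => t * E l), ‖expSum E s m‖ ^ 2
      ≤ ∑ s : ZMod p, ‖expSum E s m‖ ^ 2 :=
    Finset.sum_le_sum_of_subset_of_nonneg (Finset.subset_univ _) fun _ _ _ => by positivity
  rw [Finset.sum_image hinj'.injOn, h] at h2
  simp_rw [norm_expSum_mul E hE] at h2
  rw [Finset.sum_const, Finset.card_univ, ZMod.card, nsmul_eq_mul] at h2
  have hn : (0 : ℝ) < n := by exact_mod_cast Nat.pos_of_neZero n
  refine Real.le_sqrt_of_sq_le ?_
  nlinarith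

/-- Bound for an incomplete sum over `L` consecutive exponents, by completion modulo `n`. -/
lemma norm_incomplete_le {p n : ℕ} [Fact p.Prime] [NeZero n] (E : ZMod n → ZMod p)
    (hE : ∀ k l, E (k + l) = E k * E l) (hinj : Function.Injective E)
    (t : ZMod p) (ht : t ≠ 0) (A L : ℕ) (hL : L ≤ n) :
    ‖∑ i ∈ Finset.range L, (ZMod.stdAddChar (t * E ((A + i : ℕ) : ZMod n)) : ℂ)‖
      ≤ √p * (1 + 4 * Real.log (1 + L)) := by
  have hn : (0 : ℝ) < n := by exact_mod_cast Nat.pos_of_neZero n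
  have key : (n : ℂ) * ∑ i ∈ Finset.range L,
      (ZMod.stdAddChar (t * E ((A + i : ℕ) : ZMod n)) : ℂ) =
      ∑ m : ZMod n, expSum E t m * (starRingEnd ℂ) (incSum n A L m) := by
    unfold expSum incSum
    simp_rw [map_sum, ← AddChar.map_neg_eq_conj, Finset.sum_mul_sum]
    rw [Finset.sum_comm, Finset.mul_sum]
    simp_rw [Finset.sum_comm (s := (Finset.univ : Finset (ZMod n))) (t := Finset.range L)]
    refine Finset.sum_congr rfl fun i _ => ?_
    have : ∀ k : ZMod n, ∑ m : ZMod n,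
        (ZMod.stdAddChar (t * E k) * ZMod.stdAddChar (m * k) : ℂ) *
          ZMod.stdAddChar (-(m * ((A + i : ℕ) : ZMod n))) =
        if k = ((A + i : ℕ) : ZMod n) then (n : ℂ) * ZMod.stdAddChar (t * E k) else 0 := by
      intro k
      have e : ∀ m : ZMod n, (ZMod.stdAddChar (t * E k) * ZMod.stdAddChar (m * k) : ℂ) *
          ZMod.stdAddChar (-(m * ((A + i : ℕ) : ZMod n))) =
          ZMod.stdAddChar (t * E k) * ZMod.stdAddChar (m * (k - ((A + i : ℕ) : ZMod n))) := by
        intro m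
        rw [mul_assoc, ← AddChar.map_add_eq_mul]
        congr 2
        ring
      simp_rw [e]
      rw [← Finset.mul_sum, sum_stdAddChar_mul]
      simp only [sub_eq_zero]
      split_ifs
      · ring
      · simp
    simp_rw [this]
    simp
  have hnorm := congrArg norm key
  rw [norm_mul, Complex.norm_natCast] at hnorm
  have hb : ‖∑ m : ZMod n, expSum E t m * (starRingEnd ℂ) (incSum n A L m)‖
      ≤ √p * (n * (1 + 4 * Real.log (1 + L))) := by
    calc _ ≤ ∑ m : ZMod n, √p * ‖incSum n A L m‖ := by
          refine (norm_sum_le _ _).trans (Finset.sum_le_sum fun m _ => ?_)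
          rw [norm_mul, RCLike.norm_conj]
          gcongr
          exact norm_expSum_le E hE hinj t ht m
      _ = √p * ∑ m : ZMod n, ‖incSum n A L m‖ := by rw [Finset.mul_sum]
      _ ≤ _ := by gcongr; exact sum_norm_incSum_le n A L hL
  rw [← hnorm] at hb
  refine le_of_mul_le_mul_left ?_ hn
  linarith

/-- The number of solutions of `E(k) = a + x r`, with `k` and `x` in intervals of lengths `L` and `N`,
differs from `L N / p` by an error coming from the nonzero frequencies modulo `p`. -/
lemma abs_count_sub_le {p n : ℕ} [Fact p.Prime] [NeZero n] (E : ZMod n → ZMod p)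
    (hE : ∀ k l, E (k + l) = E k * E l) (hinj : Function.Injective E)
    (A L B N : ℕ) (hL : L ≤ n) (hN : N ≤ p) (a r : ZMod p) (hr : r ≠ 0) :
    |(∑ i ∈ Finset.range L, ∑ j ∈ Finset.range N,
        if E ((A + i : ℕ) : ZMod n) = a + ((B + j : ℕ) : ZMod p) * r then (1 : ℝ) else 0)
        - L * N / p|
      ≤ √p * (1 + 4 * Real.log (1 + L)) * (1 + 4 * Real.log (1 + N)) := by
  have hp : (0 : ℝ) < p := by exact_mod_cast (Fact.out : p.Prime).pos
  set C : ℝ := ∑ i ∈ Finset.range L, ∑ j ∈ Finset.range N,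
        if E ((A + i : ℕ) : ZMod n) = a + ((B + j : ℕ) : ZMod p) * r then (1 : ℝ) else 0 with hC
  -- the contribution of the frequency `t` to `p * C`
  let T : ZMod p → ℂ := fun t => (∑ i ∈ Finset.range L,
      (ZMod.stdAddChar (t * E ((A + i : ℕ) : ZMod n)) : ℂ)) *
      (ZMod.stdAddChar (-(t * a)) * (starRingEnd ℂ) (incSum p B N (t * r)))
  have key : ((p * C : ℝ) : ℂ) = ∑ t : ZMod p, T t := by
    have hT' : ∀ t, T t = ∑ i ∈ Finset.range L, ∑ j ∈ Finset.range N,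
        (ZMod.stdAddChar
          (t * (E ((A + i : ℕ) : ZMod n) - (a + ((B + j : ℕ) : ZMod p) * r))) : ℂ) := by
      intro t
      simp only [T, incSum]
      rw [map_sum, Finset.mul_sum, Finset.sum_mul_sum]
      refine Finset.sum_congr rfl fun i _ => Finset.sum_congr rfl fun j _ => ?_
      rw [← AddChar.map_neg_eq_conj, ← AddChar.map_add_eq_mul, ← AddChar.map_add_eq_mul]
      congr 1
      ring
    simp_rw [hT']
    rw [Finset.sum_comm, hC]
    push_cast
    rw [Finset.mul_sum]
    refine Finset.sum_congr rfl fun i _ => ?_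
    rw [Finset.sum_comm, Finset.mul_sum]
    refine Finset.sum_congr rfl fun j _ => ?_
    rw [sum_stdAddChar_mul]
    simp only [sub_eq_zero]
    split_ifs <;> simp
  have h0 : T 0 = ((L * N : ℝ) : ℂ) := by
    simp [T, incSum]
  have hT : ∀ t ≠ 0, ‖T t‖ ≤ √p * (1 + 4 * Real.log (1 + L)) * ‖incSum p B N (t * r)‖ := by
    intro t ht
    simp only [T]
    rw [norm_mul, norm_mul, RCLike.norm_conj, AddChar.norm_apply, one_mul]
    gcongr
    exact norm_incomplete_le E hE hinj t ht A L hL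
  have hlog : 0 ≤ Real.log (1 + L) := Real.log_nonneg (by simp)
  have hsum : ‖((p * C - L * N : ℝ) : ℂ)‖ ≤
      √p * (1 + 4 * Real.log (1 + L)) * (p * (1 + 4 * Real.log (1 + N))) := by
    have e : ((p * C - L * N : ℝ) : ℂ) = ∑ t ∈ Finset.univ.erase (0 : ZMod p), T t := by
      rw [Complex.ofReal_sub, key, ← h0,
        ← Finset.add_sum_erase _ T (Finset.mem_univ (0 : ZMod p))]
      ring
    rw [e]
    calc _ ≤ ∑ t ∈ Finset.univ.erase (0 : ZMod p),
            √p * (1 + 4 * Real.log (1 + L)) * ‖incSum p B N (t * r)‖ :=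
          (norm_sum_le _ _).trans (Finset.sum_le_sum fun t ht => hT t (Finset.ne_of_mem_erase ht))
      _ ≤ ∑ t : ZMod p, √p * (1 + 4 * Real.log (1 + L)) * ‖incSum p B N (t * r)‖ :=
          Finset.sum_le_sum_of_subset_of_nonneg (Finset.erase_subset _ _)
            fun _ _ _ => by positivity
      _ = √p * (1 + 4 * Real.log (1 + L)) * ∑ t : ZMod p, ‖incSum p B N t‖ := by
          rw [← Finset.mul_sum]
          congr 1
          exact Equiv.sum_comp (Equiv.mulRight₀ r hr) (fun t => ‖incSum p B N t‖)
      _ ≤ _ := by gcongr; exact sum_norm_incSum_le p B N hN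
  rw [Complex.norm_real, Real.norm_eq_abs] at hsum
  have e2 : C - L * N / p = (p * C - L * N) / p := by field_simp
  rw [e2, abs_div, abs_of_pos hp, div_le_iff₀ hp]
  linarith

/-! ### From the counting estimate to the discrepancy -/

lemma bound_arith (s l y x : ℝ) (hs : 1 ≤ s) (hl : 1 ≤ l) (hy : -(7 / 5) ≤ y)
    (u v : ℝ) (hv0 : 0 ≤ v) (hu : u ≤ 3 + y) (hv : v ≤ l)
    (hx : x ≤ s * (1 + 4 * u) * (1 + 4 * v) + 2) :
    x ≤ 100 * s * l * (2 + y) := by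
  have h1 : s * (1 + 4 * u) * (1 + 4 * v) ≤ s * (13 * (2 + y)) * (5 * l) := by
    have h5 : 0 ≤ s * (13 * (2 + y)) := mul_nonneg (by linarith) (by linarith)
    refine mul_le_mul (mul_le_mul_of_nonneg_left ?_ ?_) ?_ ?_ h5 <;> linarith
  have h2 : 1 ≤ s * l := by nlinarith
  have h3 : 2 ≤ 4 * (s * l) * (2 + y) := by nlinarith
  have h4 : 0 ≤ s * l * (2 + y) := by apply mul_nonneg <;> linarith
  nlinarith

/-- The exponents `k < n` with `k / n ∈ [α, β]` form an interval of `L` consecutive integers, where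
`L` differs from `(β - α) n` by at most `1`. -/
lemma exists_index_interval (n : ℕ) (hn : 0 < n) (α β : ℝ) (hα : 0 ≤ α) (hαβ : α ≤ β)
    (hβ : β ≤ 1) :
    ∃ A L : ℕ, L ≤ n ∧ |(L : ℝ) - (β - α) * n| ≤ 1 ∧
      ∀ k : ℕ, (A ≤ k ∧ k < A + L) ↔ (k < n ∧ α ≤ (k : ℝ) / n ∧ (k : ℝ) / n ≤ β) := by
  have hn0 : (0 : ℝ) < n := by exact_mod_cast hn
  have hβ0 : 0 ≤ β := hα.trans hαβ
  -- the endpoint `n` itself is excluded, even when `β = 1`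
  set A := ⌈α * n⌉₊ with hA
  set B := min (⌊β * n⌋₊ + 1) n with hB
  have hBr : (B : ℝ) ≤ β * n + 1 := by
    have h1 : (B : ℝ) ≤ (⌊β * n⌋₊ + 1 : ℕ) := by exact_mod_cast min_le_left _ _
    have h2 := Nat.floor_le (a := β * n) (by positivity)
    push_cast at h1
    linarith
  have hBl : β * n ≤ B := by
    rw [hB, Nat.cast_min]
    refine le_min ?_ (by nlinarith)
    push_cast
    exact (Nat.lt_floor_add_one _).le
  have hAr : (A : ℝ) < α * n + 1 := Nat.ceil_lt_add_one (by positivity)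
  have hAl : α * n ≤ A := Nat.le_ceil _
  refine ⟨A, B - A, (Nat.sub_le _ _).trans (min_le_right _ _), ?_, ?_⟩
  · rw [abs_le]
    rcases le_total A B with h | h
    · rw [Nat.cast_sub h]
      constructor <;> linarith
    · rw [Nat.sub_eq_zero_of_le h]
      have h' : (B : ℝ) ≤ A := by exact_mod_cast h
      have : α * n ≤ β * n := by gcongr
      push_cast
      constructor <;> linarith
  · intro k
    rw [le_div_iff₀ hn0, div_le_iff₀ hn0, ← Nat.ceil_le, ← Nat.le_floor_iff (by positivity), ← hA]
    omega

theorem discrepancy_interval_bound :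
    ∃ c₁ : ℝ, 0 < c₁ ∧
      ∀ (p : ℕ), p.Prime → 2 < p →
      ∀ (g : ℕ), IsPrimitiveRoot (g : ZMod p) (p - 1) →
      ∀ (a r N : ℕ), 0 < r → 0 < N →
      (∀ j : ℕ, 1 ≤ j → j ≤ N → 1 ≤ a + j * r ∧ a + j * r ≤ p - 1) →
      ∀ (dlog : ℕ → ℕ),
      (∀ z : ℕ, 1 ≤ z → z ≤ p - 1 →
        dlog z ≤ p - 2 ∧ (g : ZMod p) ^ dlog z = (z : ZMod p)) →
      ∀ (α β : ℝ), 0 ≤ α → α ≤ β → β ≤ 1 →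
      1 / Real.pi < (p : ℝ) * (β - α) →
      |((((Finset.Icc 1 N).filter (fun j : ℕ =>
            α ≤ (dlog (a + j * r) : ℝ) / ((p : ℝ) - 1) ∧
            (dlog (a + j * r) : ℝ) / ((p : ℝ) - 1) ≤ β)).card : ℝ)
          - (β - α) * (N : ℝ))| ≤
        c₁ * Real.sqrt p * Real.log p * (2 + Real.log ((p : ℝ) * (β - α))) := by
  refine ⟨100, by norm_num, ?_⟩
  intro p hp hp2 g hg a r N hr hN hJ dlog hdlog α β hα hαβ hβ hX
  have : Fact p.Prime := ⟨hp⟩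
  obtain ⟨n, hn⟩ : ∃ n, n = p - 1 := ⟨_, rfl⟩
  have : NeZero n := ⟨by omega⟩
  have hnp : p = n + 1 := by omega
  have hcast : (p : ℝ) - 1 = n := by rw [hnp]; push_cast; ring
  rw [← hn] at hg
  rw [hcast]
  obtain ⟨A, L, hLn, hL, hAL⟩ := exists_index_interval n (by omega) α β hα hαβ hβ
  let E : ZMod n → ZMod p := fun k => (g : ZMod p) ^ k.val
  have hEcast : ∀ k : ℕ, E (k : ZMod n) = (g : ZMod p) ^ k := by
    intro k
    simp only [E, ZMod.val_natCast]
    exact (pow_eq_pow_mod k hg.pow_eq_one).symm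
  have hE : ∀ k l, E (k + l) = E k * E l := by
    intro k l
    simp only [E, ZMod.val_add, ← pow_add]
    exact (pow_eq_pow_mod _ hg.pow_eq_one).symm
  have hinj : Function.Injective E := fun k l h =>
    ZMod.val_injective n (hg.pow_inj k.val_lt l.val_lt h)
  have hrp : r < p := by
    have := (hJ 1 le_rfl hN).2
    omega
  have hr0 : (r : ZMod p) ≠ 0 := by
    rw [Ne, ZMod.natCast_eq_zero_iff]
    exact fun h => absurd (Nat.le_of_dvd hr h) (by omega)
  have hNp : N ≤ n := by
    have := (hJ N hN le_rfl).2
    have : N ≤ N * r := Nat.le_mul_of_pos_right N hr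
    omega
  have hcount := abs_count_sub_le E hE hinj A L 1 N hLn (by omega) (a : ZMod p) (r : ZMod p) hr0
  -- each `j` is counted once, at the exponent `dlog (a + j * r)`
  have hC : (∑ i ∈ Finset.range L, ∑ j ∈ Finset.range N,
      if E ((A + i : ℕ) : ZMod n) = a + ((1 + j : ℕ) : ZMod p) * r then (1 : ℝ) else 0) =
      (((Finset.Icc 1 N).filter (fun j : ℕ =>
            α ≤ (dlog (a + j * r) : ℝ) / n ∧ (dlog (a + j * r) : ℝ) / n ≤ β)).card : ℝ) := by
    rw [Finset.sum_comm, Finset.card_filter, Nat.cast_sum,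
      show Finset.Icc 1 N = Finset.Ico 1 (N + 1) from rfl, Finset.sum_Ico_eq_sum_range]
    refine Finset.sum_congr rfl fun j hj => ?_
    have hj := Finset.mem_range.1 hj
    obtain ⟨h1, h2⟩ := hJ (1 + j) (by omega) (by omega)
    obtain ⟨h3, h4⟩ := hdlog _ h1 h2
    set d := dlog (a + (1 + j) * r) with hd
    have hd' : d < n := by omega
    have hcond : ∀ i ∈ Finset.range L,
        (E ((A + i : ℕ) : ZMod n) = a + ((1 + j : ℕ) : ZMod p) * r ↔ A + i = d) := by
      intro i hi
      have hin := ((hAL (A + i)).1 ⟨by omega, by have := Finset.mem_range.1 hi; omega⟩).1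
      rw [hEcast, show (a : ZMod p) + ((1 + j : ℕ) : ZMod p) * r
        = ((a + (1 + j) * r : ℕ) : ZMod p) by push_cast; ring, ← h4]
      exact ⟨fun h => hg.pow_inj hin hd' h, fun h => by rw [h]⟩
    rw [Finset.sum_congr rfl fun i hi => if_congr (hcond i hi) rfl rfl]
    have hiff := hAL d
    by_cases hmem : A ≤ d ∧ d < A + L
    · rw [if_pos (hiff.1 hmem).2, Finset.sum_eq_single (d - A)]
      · rw [if_pos (by omega)]; simp
      · intro b _ hb; rw [if_neg (by omega)]
      · intro h; exact absurd (Finset.mem_range.2 (by omega)) h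
    · rw [if_neg fun h => hmem (hiff.2 ⟨hd', h⟩)]
      rw [Finset.sum_eq_zero]; · simp
      intro i hi
      have := Finset.mem_range.1 hi
      rw [if_neg (by omega)]
  rw [hC] at hcount
  have hp3 : (3 : ℝ) ≤ p := by exact_mod_cast hp2
  have hp0 : (0 : ℝ) < p := by linarith
  have hNr : (N : ℝ) ≤ n := by exact_mod_cast hNp
  have hpn : (p : ℝ) = n + 1 := by rw [hnp]; push_cast; ring
  have hN0 : (0 : ℝ) ≤ N := Nat.cast_nonneg N
  have hL' := abs_le.1 hL
  -- replacing `L / p` by `β - α` costs at most `2 / p` for each of the `N ≤ p` terms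
  have hmain : |(L : ℝ) * N / p - (β - α) * N| ≤ 2 := by
    have e : (L : ℝ) * N / p - (β - α) * N
        = ((L : ℝ) - (β - α) * n - (β - α)) * (N / p) := by
      rw [hpn]; field_simp; ring
    have h1 : |(L : ℝ) - (β - α) * n - (β - α)| ≤ 2 := by
      rw [abs_le]; constructor <;> linarith
    have h2 : |(N : ℝ) / p| ≤ 1 := by
      rw [abs_of_nonneg (by positivity), div_le_one hp0]; linarith
    rw [e, abs_mul]
    nlinarith [abs_nonneg ((N : ℝ) / p)]
  set X := (p : ℝ) * (β - α) with hXdef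
  have hpi := Real.pi_pos
  have hpi4 := Real.pi_lt_four
  have hX0 : 0 < X := lt_trans (by positivity) hX
  have hX4 : 1 / 4 ≤ X := by
    refine le_trans ?_ hX.le
    gcongr
  have hlog2 := Real.log_two_lt_d9
  have hlogX : -(7 / 5) ≤ Real.log X := by
    have h1 := Real.log_le_log (by norm_num) hX4
    have h2 : Real.log (1 / 4 : ℝ) = -(2 * Real.log 2) := by
      rw [one_div, Real.log_inv, show (4 : ℝ) = 2 ^ 2 by norm_num, Real.log_pow]; push_cast; ring
    linarith
  have hLX : Real.log (1 + L) ≤ 3 + Real.log X := by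
    have h1 : (1 : ℝ) + L ≤ 16 * X := by
      have : (β - α) * n ≤ X := by rw [hXdef, hpn]; nlinarith
      linarith
    have h2 := Real.log_le_log (by positivity) h1
    rw [Real.log_mul (by norm_num) hX0.ne', show (16 : ℝ) = 2 ^ 4 by norm_num, Real.log_pow] at h2
    push_cast at h2
    linarith
  refine bound_arith (√p) (Real.log p) (Real.log X) _ ?_ ?_ hlogX (Real.log (1 + L))
    (Real.log (1 + N)) (Real.log_nonneg (by simp)) hLX ?_ ?_
  · exact Real.one_le_sqrt.2 (by linarith)
  · rw [Real.le_log_iff_exp_le hp0]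
    linarith [Real.exp_one_lt_d9]
  · exact Real.log_le_log (by positivity) (by linarith)
  · refine (abs_sub_le _ ((L : ℝ) * N / p) _).trans ?_
    linarith
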